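/- arXiv:2603.26564 — 8 statements merged into one kernel-verified Lean document; each statement's English description precedes it below -/
import Mathlib

section
/- Let π be a tour on V = Fin n and let v : ZMod m → V (m ≥ 2) be an injective closed walk in the tour graph of π (a simple directed cycle: each arc (v j, v (j+1)) is either an insertion arc or a removal arc, and the vertices v 0, …, v (m−1) are pairwise distinct). Suppose the post-cancel flow f of this walk is the arc-indicator of a tour different from π, i.e. there exists a fixed-point-free single-cycle permutation σ ≠ π of V with f i k = (if k = σ i then 1 else 0) for all i, k. Then the arcs of the walk alternate in type: for every index j, exactly one of the two consecutive arcs (v j, v (j+1)) and (v (j+1), v (j+2)) is a removal arc and the other is an insertion arc. -/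
/-! The flow of a tour has exactly one unit leaving each vertex `i`. By contrast the row sum
`∑ k, f i k` of the post-cancel flow is one, plus the number of insertion arcs of the walk that
leave `i`, minus the number of removal arcs of the walk that enter `i`. At `i = v (j + 1)`
injectivity of `v` leaves a single arc of the walk out of `i`, namely arc `j + 1`, and a single
one into `i`, namely arc `j`. Hence arc `j` is a removal arc if and only if arc `j + 1` is an
insertion arc (`removal_iff_next_insertion`), and alternation follows because no arc is of both
types. -/

/-- A tour on `Fin n`: a fixed-point-free permutation forming a single cycle. -/
def IsTour {n : ℕ} (π : Equiv.Perm (Fin n)) : Prop :=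
  (∀ i, π i ≠ i) ∧ π.IsCycle ∧ π.support = Finset.univ

/-- Insertion arc of the tour graph of `π`: a pair `(h, k)` with
`h ≠ k`, `k ≠ π h` and `h ≠ π k`. -/
def IsInsertionArc {n : ℕ} (π : Equiv.Perm (Fin n)) (h k : Fin n) : Prop :=
  h ≠ k ∧ k ≠ π h ∧ h ≠ π k

/-- Removal arc of the tour graph of `π`: a reversed tour arc `(π i, i)`. -/
def IsRemovalArc {n : ℕ} (π : Equiv.Perm (Fin n)) (a b : Fin n) : Prop :=
  a = π b

instance {n : ℕ} (π : Equiv.Perm (Fin n)) (h k : Fin n) :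
    Decidable (IsInsertionArc π h k) := by
  unfold IsInsertionArc; infer_instance

instance {n : ℕ} (π : Equiv.Perm (Fin n)) (a b : Fin n) :
    Decidable (IsRemovalArc π a b) := by
  unfold IsRemovalArc; infer_instance

/-- The post-cancel flow of a closed walk `v : ZMod m → Fin n` in the tour graph of `π`:
`f i k = [k = π i] + #{j : (v j, v (j+1)) = (i,k) is an insertion arc}
           − #{j : (v j, v (j+1)) = (k,i) is a removal arc}`. -/
def postCancelFlow {n m : ℕ} [NeZero m] (π : Equiv.Perm (Fin n))
    (v : ZMod m → Fin n) (i k : Fin n) : ℤ :=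
  (if k = π i then 1 else 0)
  + ((Finset.univ.filter fun j : ZMod m =>
        IsInsertionArc π (v j) (v (j + 1)) ∧ v j = i ∧ v (j + 1) = k).card : ℤ)
  - ((Finset.univ.filter fun j : ZMod m =>
        IsRemovalArc π (v j) (v (j + 1)) ∧ v j = k ∧ v (j + 1) = i).card : ℤ)

/-- Outflow of the post-cancel flow at a vertex of a simple closed walk. -/
lemma sum_postCancelFlow {n m : ℕ} [NeZero m] (π : Equiv.Perm (Fin n))
    (v : ZMod m → Fin n) (hinj : Function.Injective v) (j : ZMod m) :
    ∑ k, postCancelFlow π v (v (j + 1)) k =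
      1 + (if IsInsertionArc π (v (j + 1)) (v (j + 2)) then 1 else 0)
        - (if IsRemovalArc π (v j) (v (j + 1)) then 1 else 0) := by
  have hj : j + 1 + 1 = j + 2 := by ring
  have hins : ∀ k, ((Finset.univ.filter fun l : ZMod m =>
      IsInsertionArc π (v l) (v (l + 1)) ∧ v l = v (j + 1) ∧ v (l + 1) = k).card : ℤ) =
      if v (j + 2) = k then
        (if IsInsertionArc π (v (j + 1)) (v (j + 2)) then 1 else 0) else 0 := by
    intro k
    have : ∀ l : ZMod m,
        (IsInsertionArc π (v l) (v (l + 1)) ∧ v l = v (j + 1) ∧ v (l + 1) = k) ↔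
        (l = j + 1 ∧ v (j + 2) = k ∧ IsInsertionArc π (v (j + 1)) (v (j + 2))) := by
      intro l
      rw [hinj.eq_iff]
      constructor
      · rintro ⟨h, rfl, h'⟩
        rw [hj] at h h'
        exact ⟨rfl, h', h⟩
      · rintro ⟨rfl, h', h⟩
        rw [hj]
        exact ⟨h, rfl, h'⟩
    simp only [this, Finset.filter_and, Finset.filter_eq', Finset.mem_univ, if_true]
    by_cases h1 : v (j + 2) = k <;>
      by_cases h2 : IsInsertionArc π (v (j + 1)) (v (j + 2)) <;> simp [h1, h2]
    all_goals simp_all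
  have hrem : ∀ k, ((Finset.univ.filter fun l : ZMod m =>
      IsRemovalArc π (v l) (v (l + 1)) ∧ v l = k ∧ v (l + 1) = v (j + 1)).card : ℤ) =
      if v j = k then (if IsRemovalArc π (v j) (v (j + 1)) then 1 else 0) else 0 := by
    intro k
    have : ∀ l : ZMod m,
        (IsRemovalArc π (v l) (v (l + 1)) ∧ v l = k ∧ v (l + 1) = v (j + 1)) ↔
        (l = j ∧ v j = k ∧ IsRemovalArc π (v j) (v (j + 1))) := by
      intro l
      rw [hinj.eq_iff, add_left_inj]
      constructor
      · rintro ⟨h, h', rfl⟩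
        exact ⟨rfl, h', h⟩
      · rintro ⟨rfl, h', h⟩
        exact ⟨h, h', rfl⟩
    simp only [this, Finset.filter_and, Finset.filter_eq', Finset.mem_univ, if_true]
    by_cases h1 : v j = k <;>
      by_cases h2 : IsRemovalArc π (v j) (v (j + 1)) <;> simp [h1, h2]
    all_goals simp_all
  simp only [postCancelFlow, hins, hrem, Finset.sum_sub_distrib, Finset.sum_add_distrib,
    Finset.sum_ite_eq, Finset.sum_ite_eq', Finset.mem_univ, if_true]

/-- Conservation of outflow at `v (j + 1)`: the walk enters a vertex by a removal arc exactly
when it leaves it by an insertion arc. -/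
lemma removal_iff_next_insertion {n m : ℕ} [NeZero m] (π σ : Equiv.Perm (Fin n))
    (v : ZMod m → Fin n) (hinj : Function.Injective v)
    (hflow : ∀ i k : Fin n, postCancelFlow π v i k = if k = σ i then 1 else 0) (j : ZMod m) :
    IsRemovalArc π (v j) (v (j + 1)) ↔ IsInsertionArc π (v (j + 1)) (v (j + 2)) := by
  have h := sum_postCancelFlow π v hinj j
  simp only [hflow, Finset.sum_ite_eq', Finset.mem_univ, if_true] at h
  clear hflow
  split_ifs at h with h1 h2 h2 <;> first | (simp only [h1, h2]; done) | omega

/-- If cancelling a simple directed cycle in the tour graph of a tour `π` produces a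
tour different from `π`, then the arcs of the cycle alternate between removal and
insertion arcs. -/
theorem stmt0 {n m : ℕ} (hn : 2 ≤ n) (hm : 2 ≤ m) [NeZero m]
    (π : Equiv.Perm (Fin n)) (hπ : IsTour π)
    (v : ZMod m → Fin n) (hinj : Function.Injective v)
    (hwalk : ∀ j : ZMod m,
      IsInsertionArc π (v j) (v (j + 1)) ∨ IsRemovalArc π (v j) (v (j + 1)))
    (σ : Equiv.Perm (Fin n)) (hσ : IsTour σ) (hσπ : σ ≠ π)
    (hflow : ∀ i k : Fin n, postCancelFlow π v i k = if k = σ i then 1 else 0) :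
    ∀ j : ZMod m,
      (IsRemovalArc π (v j) (v (j + 1)) ∧ IsInsertionArc π (v (j + 1)) (v (j + 2))) ∨
      (IsInsertionArc π (v j) (v (j + 1)) ∧ IsRemovalArc π (v (j + 1)) (v (j + 2))) := by
  intro j
  have hj : j + 1 + 1 = j + 2 := by ring
  have key := removal_iff_next_insertion π σ v hinj hflow j
  rcases hwalk j with hins | hrem
  · right
    refine ⟨hins, ?_⟩
    have hnext := hwalk (j + 1)
    rw [hj] at hnext
    -- An insertion arc `(h, k)` has `h ≠ π k`, so arc `j` is not a removal arc.
    exact hnext.resolve_left fun h => hins.2.2 (key.mpr h)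
  · exact Or.inl ⟨hrem, key.mp hrem⟩
end

section
/- Let π be a tour on V = Fin n and let v : ZMod m → V (m ≥ 2) be an injective closed walk in the tour graph of π (each arc (v j, v (j+1)) is either an insertion arc or a removal arc, vertices pairwise distinct). If for some index j both arcs (v (j−1), v j) and (v j, v (j+1)) incident to the vertex w = v j are removal arcs, then in the post-cancel flow f the vertex w is isolated: ∑ k, f w k = 0 and ∑ k, f k w = 0. -/
theorem flow_out_eq_zero {n m : ℕ} [NeZero m] (π : Equiv.Perm (Fin n))
    (v : ZMod m → Fin n) (hinj : Function.Injective v) (j : ZMod m)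
    (hin : IsRemovalArc π (v (j - 1)) (v j))
    (hout : IsRemovalArc π (v j) (v (j + 1))) (k : Fin n) :
    postCancelFlow π v (v j) k = 0 := by
  have hI : (Finset.univ.filter fun i : ZMod m =>
      IsInsertionArc π (v i) (v (i + 1)) ∧ v i = v j ∧ v (i + 1) = k) = ∅ := by
    refine Finset.filter_eq_empty_iff.mpr ?_
    rintro i - ⟨h, hi, -⟩
    obtain rfl := hinj hi
    exact h.2.2 hout
  have hR : (Finset.univ.filter fun i : ZMod m =>
      IsRemovalArc π (v i) (v (i + 1)) ∧ v i = k ∧ v (i + 1) = v j) =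
      if k = π (v j) then {j - 1} else ∅ := by
    ext i
    split_ifs with hk
    · simp only [Finset.mem_filter, Finset.mem_univ, true_and, Finset.mem_singleton]
      constructor
      · rintro ⟨-, -, h⟩
        exact eq_sub_of_add_eq (hinj h)
      · rintro rfl
        rw [sub_add_cancel]
        exact ⟨hin, hin.trans hk.symm, rfl⟩
    · simp only [Finset.mem_filter, Finset.mem_univ, true_and, Finset.notMem_empty, iff_false]
      rintro ⟨h, rfl, h'⟩
      exact hk (h' ▸ h)
  unfold postCancelFlow
  rw [hI, hR]
  split_ifs <;> simp

theorem flow_in_eq_zero {n m : ℕ} [NeZero m] (π : Equiv.Perm (Fin n))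
    (v : ZMod m → Fin n) (hinj : Function.Injective v) (j : ZMod m)
    (hin : IsRemovalArc π (v (j - 1)) (v j))
    (hout : IsRemovalArc π (v j) (v (j + 1))) (k : Fin n) :
    postCancelFlow π v k (v j) = 0 := by
  have hI : (Finset.univ.filter fun i : ZMod m =>
      IsInsertionArc π (v i) (v (i + 1)) ∧ v i = k ∧ v (i + 1) = v j) = ∅ := by
    refine Finset.filter_eq_empty_iff.mpr ?_
    rintro i - ⟨h, -, hi⟩
    obtain rfl := eq_sub_of_add_eq (hinj hi)
    rw [sub_add_cancel] at h
    exact h.2.2 hin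
  have hR : (Finset.univ.filter fun i : ZMod m =>
      IsRemovalArc π (v i) (v (i + 1)) ∧ v i = v j ∧ v (i + 1) = k) =
      if v j = π k then {j} else ∅ := by
    ext i
    split_ifs with hk
    · simp only [Finset.mem_filter, Finset.mem_univ, true_and, Finset.mem_singleton]
      constructor
      · rintro ⟨-, h, -⟩
        exact hinj h
      · rintro rfl
        exact ⟨hout, rfl, π.injective (hout.symm.trans hk)⟩
    · simp only [Finset.mem_filter, Finset.mem_univ, true_and, Finset.notMem_empty, iff_false]
      rintro ⟨h, h', rfl⟩
      exact hk (h' ▸ h)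
  unfold postCancelFlow
  rw [hI, hR]
  split_ifs <;> simp

/-- If both arcs of a simple cycle in the tour graph incident to the vertex `w = v j`
are removal arcs, then `w` is isolated in the post-cancel flow. -/
theorem stmt1 {n m : ℕ} (hn : 2 ≤ n) (hm : 2 ≤ m) [NeZero m]
    (π : Equiv.Perm (Fin n)) (hπ : IsTour π)
    (v : ZMod m → Fin n) (hinj : Function.Injective v)
    (hwalk : ∀ j : ZMod m,
      IsInsertionArc π (v j) (v (j + 1)) ∨ IsRemovalArc π (v j) (v (j + 1)))
    (j : ZMod m)
    (hin : IsRemovalArc π (v (j - 1)) (v j))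
    (hout : IsRemovalArc π (v j) (v (j + 1))) :
    (∑ k, postCancelFlow π v (v j) k = 0) ∧ (∑ k, postCancelFlow π v k (v j) = 0) := by
  exact ⟨Finset.sum_eq_zero fun k _ => flow_out_eq_zero π v hinj j hin hout k,
    Finset.sum_eq_zero fun k _ => flow_in_eq_zero π v hinj j hin hout k⟩
end

section
/- Let π be a tour on V = Fin n and let v : ZMod m → V (m ≥ 2) be an injective closed walk in the tour graph of π (each arc (v j, v (j+1)) is either an insertion arc or a removal arc, vertices pairwise distinct). If for some index j both arcs (v (j−1), v j) and (v j, v (j+1)) incident to the vertex w = v j are insertion arcs, then in the post-cancel flow f the vertex w has in-degree 2 and out-degree 2: ∑ k, f w k = 2 and ∑ k, f k w = 2. -/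
/-- Splitting a finite set of positions according to the value of `b`. -/
theorem sum_card_filter_and_eq {ι α : Type*} [Fintype ι] [Fintype α] [DecidableEq α]
    (P : ι → Prop) [DecidablePred P] (b : ι → α) :
    ∑ k, ((Finset.univ.filter fun l => P l ∧ b l = k).card : ℤ) =
      ((Finset.univ.filter P).card : ℤ) := by
  rw [Finset.card_eq_sum_card_fiberwise (f := b) (t := Finset.univ) (by simp)]
  simp [Finset.filter_filter]

theorem sum_postCancelFlow_out {n m : ℕ} [NeZero m] (π : Equiv.Perm (Fin n))
    (v : ZMod m → Fin n) (w : Fin n) :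
    ∑ k, postCancelFlow π v w k =
      1 + ((Finset.univ.filter fun l : ZMod m =>
          IsInsertionArc π (v l) (v (l + 1)) ∧ v l = w).card : ℤ)
        - ((Finset.univ.filter fun l : ZMod m =>
          IsRemovalArc π (v l) (v (l + 1)) ∧ v (l + 1) = w).card : ℤ) := by
  rw [← sum_card_filter_and_eq _ (fun l => v (l + 1)), ← sum_card_filter_and_eq _ v]
  simp [postCancelFlow, Finset.sum_add_distrib, Finset.sum_sub_distrib, and_assoc,
    and_comm (a := v _ = _) (b := v (_ + 1) = w)]

theorem sum_postCancelFlow_in {n m : ℕ} [NeZero m] (π : Equiv.Perm (Fin n))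
    (v : ZMod m → Fin n) (w : Fin n) :
    ∑ k, postCancelFlow π v k w =
      1 + ((Finset.univ.filter fun l : ZMod m =>
          IsInsertionArc π (v l) (v (l + 1)) ∧ v (l + 1) = w).card : ℤ)
        - ((Finset.univ.filter fun l : ZMod m =>
          IsRemovalArc π (v l) (v (l + 1)) ∧ v l = w).card : ℤ) := by
  rw [← sum_card_filter_and_eq _ v, ← sum_card_filter_and_eq _ (fun l => v (l + 1))]
  -- The condition `w = π k` has to be solved for the summation variable `k`.
  have hk : ∀ k, (w = π k) = (k = π.symm w) := fun k => by
    rw [Equiv.eq_symm_apply, @eq_comm _ w]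
  simp [postCancelFlow, Finset.sum_add_distrib, Finset.sum_sub_distrib, and_assoc, hk,
    and_comm (a := v _ = _) (b := v (_ + 1) = w)]

/-- If both arcs of a simple cycle in the tour graph incident to the vertex `w = v j`
are insertion arcs, then `w` has in-degree 2 and out-degree 2 in the post-cancel flow. -/
theorem stmt2 {n m : ℕ} (hn : 2 ≤ n) (hm : 2 ≤ m) [NeZero m]
    (π : Equiv.Perm (Fin n)) (hπ : IsTour π)
    (v : ZMod m → Fin n) (hinj : Function.Injective v)
    (hwalk : ∀ j : ZMod m,
      IsInsertionArc π (v j) (v (j + 1)) ∨ IsRemovalArc π (v j) (v (j + 1)))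
    (j : ZMod m)
    (hin : IsInsertionArc π (v (j - 1)) (v j))
    (hout : IsInsertionArc π (v j) (v (j + 1))) :
    (∑ k, postCancelFlow π v (v j) k = 2) ∧ (∑ k, postCancelFlow π v k (v j) = 2) := by
  -- A removal arc entering or leaving `w` would sit at position `j - 1` or `j`.
  have hnin : ∀ l, IsRemovalArc π (v l) (v (l + 1)) → l + 1 ≠ j := by
    rintro l hl rfl
    rw [add_sub_cancel_right] at hin
    exact hin.2.2 hl
  have hnout : ∀ l, IsRemovalArc π (v l) (v (l + 1)) → l ≠ j := by
    rintro l hl rfl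
    exact hout.2.2 hl
  have hin' : IsInsertionArc π (v (j - 1)) (v (j - 1 + 1)) := by
    rwa [sub_add_cancel]
  constructor
  · have hins : (Finset.univ.filter fun l : ZMod m =>
        IsInsertionArc π (v l) (v (l + 1)) ∧ v l = v j) = {j} := by
      ext l
      simp only [Finset.mem_filter, Finset.mem_univ, true_and, Finset.mem_singleton, hinj.eq_iff]
      exact ⟨And.right, by rintro rfl; exact ⟨hout, rfl⟩⟩
    have hrem : (Finset.univ.filter fun l : ZMod m =>
        IsRemovalArc π (v l) (v (l + 1)) ∧ v (l + 1) = v j) = ∅ := by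
      ext l
      simpa [hinj.eq_iff] using hnin l
    rw [sum_postCancelFlow_out, hins, hrem]
    simp
  · have hins : (Finset.univ.filter fun l : ZMod m =>
        IsInsertionArc π (v l) (v (l + 1)) ∧ v (l + 1) = v j) = {j - 1} := by
      ext l
      simp only [Finset.mem_filter, Finset.mem_univ, true_and, Finset.mem_singleton, hinj.eq_iff,
        eq_sub_iff_add_eq]
      refine ⟨And.right, fun h => ⟨?_, h⟩⟩
      rwa [← eq_sub_iff_add_eq.mpr h] at hin'
    have hrem : (Finset.univ.filter fun l : ZMod m =>
        IsRemovalArc π (v l) (v (l + 1)) ∧ v l = v j) = ∅ := by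
      ext l
      simpa [hinj.eq_iff] using hnout l
    rw [sum_postCancelFlow_in, hins, hrem]
    simp
end

section
/- Let π be a tour on V = Fin n and let v : ZMod (2m) → V (m ≥ 1) be a tour-alternating cycle: the arcs (v j, v (j+1)) are pairwise distinct, for even j the arc (v j, v (j+1)) is an insertion arc, and for odd j it is a removal arc (i.e. v j = π (v (j+1))). Then the post-cancel flow f takes values in {0, 1} and satisfies ∑ k, f i k = 1 and ∑ k, f k i = 1 for every vertex i; equivalently, there exists a fixed-point-free permutation σ of V with f i k = (if k = σ i then 1 else 0) for all i, k, so the post-cancel arc set is a tour or a spanning vertex-disjoint collection of subtours (the cycles of σ). -/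
/-- A tour-alternating cycle of length `2*m` in the tour graph of `π`: a closed walk
`v : ZMod (2*m) → Fin n` whose arcs are pairwise distinct, with insertion arcs at even
indices and removal arcs (`v j = π (v (j+1))`) at odd indices. -/
def IsTourAltCycle {n m : ℕ} (π : Equiv.Perm (Fin n)) (v : ZMod (2 * m) → Fin n) : Prop :=
  (∀ j j' : ZMod (2 * m), (v j, v (j + 1)) = (v j', v (j' + 1)) → j = j') ∧
  (∀ j : ZMod (2 * m), Even j.val → IsInsertionArc π (v j) (v (j + 1))) ∧
  (∀ j : ZMod (2 * m), ¬ Even j.val → v j = π (v (j + 1)))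

/-- The post-cancel flow of a tour-alternating cycle `v : ZMod (2*m) → Fin n`:
`f i k = [k = π i] + #{even j : (v j, v (j+1)) = (i,k)} − #{odd j : (v j, v (j+1)) = (k,i)}`. -/
def postCancelFlowAlt {n m : ℕ} [NeZero m] (π : Equiv.Perm (Fin n))
    (v : ZMod (2 * m) → Fin n) (i k : Fin n) : ℤ :=
  (if k = π i then 1 else 0)
  + ((Finset.univ.filter fun j : ZMod (2 * m) =>
        Even j.val ∧ v j = i ∧ v (j + 1) = k).card : ℤ)
  - ((Finset.univ.filter fun j : ZMod (2 * m) =>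
        ¬ Even j.val ∧ v j = k ∧ v (j + 1) = i).card : ℤ)

/-- Parity of representatives alternates on `ZMod (2 * m)`, also across the wrap-around. -/
theorem even_val_add_one {m : ℕ} [NeZero m] (j : ZMod (2 * m)) :
    Even (j + 1).val ↔ ¬ Even j.val := by
  have hm : 0 < m := Nat.pos_of_ne_zero (NeZero.ne m)
  have h1 : (1 : ZMod (2 * m)).val = 1 := by
    rw [ZMod.val_one_eq_one_mod, Nat.mod_eq_of_lt (by omega)]
  rw [ZMod.val_add, h1, Nat.even_iff, Nat.mod_mul_right_mod, Nat.even_iff]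
  omega

theorem sum_card_fiber {α β : Type*} [Fintype α] [Fintype β] [DecidableEq β]
    (p : α → Prop) [DecidablePred p] (g : α → β) :
    ∑ k, ((Finset.univ.filter fun j => p j ∧ g j = k).card : ℤ)
      = (Finset.univ.filter p).card := by
  rw [Finset.card_eq_sum_card_fiberwise (f := g) (t := Finset.univ) (by simp)]
  push_cast
  simp only [Finset.filter_filter]

/-- An integer matrix with entries `0` and `1` and all row and column sums equal to `1` is a
permutation matrix. -/
theorem exists_perm_of_zero_one {V : Type*} [Fintype V] [DecidableEq V] (f : V → V → ℤ)
    (h01 : ∀ i k, f i k = 0 ∨ f i k = 1) (hrow : ∀ i, ∑ k, f i k = 1)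
    (hcol : ∀ i, ∑ k, f k i = 1) :
    ∃ σ : Equiv.Perm V, ∀ i k, f i k = if k = σ i then 1 else 0 := by
  have key : ∀ g : V → ℤ, (∀ k, g k = 0 ∨ g k = 1) → ∑ k, g k = 1 → ∃! k, g k = 1 := by
    intro g hg hs
    have hind : ∀ k, g k = if g k = 1 then 1 else 0 := by
      intro k
      rcases hg k with h | h <;> simp [h]
    rw [Finset.sum_congr rfl fun k _ => hind k, Finset.sum_boole] at hs
    obtain ⟨a, ha⟩ := Finset.card_eq_one.mp (by exact_mod_cast hs)
    have hmem : ∀ k, g k = 1 ↔ k = a := by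
      intro k
      simpa using congrArg (k ∈ ·) ha
    exact ⟨a, (hmem a).2 rfl, fun k hk => (hmem k).1 hk⟩
  choose s hs hs' using fun i => key (f i) (h01 i) (hrow i)
  have hinj : Function.Injective s := by
    intro a b hab
    refine (key (fun k => f k (s b)) (fun k => h01 k _) (hcol _)).unique ?_ (hs b)
    have := hs a
    rwa [hab] at this
  refine ⟨Equiv.ofBijective s (Finite.injective_iff_bijective.mp hinj), fun i k => ?_⟩
  simp only [Equiv.ofBijective_apply]
  split_ifs with h
  · rw [h]; exact hs i
  · exact (h01 i k).resolve_right fun h1 => h (hs' i k h1)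

section

variable {n m : ℕ} [NeZero m] {π : Equiv.Perm (Fin n)} {v : ZMod (2 * m) → Fin n}

theorem card_insertion_le_one (hv : IsTourAltCycle π v) (i k : Fin n) :
    (Finset.univ.filter fun j : ZMod (2 * m) =>
      Even j.val ∧ v j = i ∧ v (j + 1) = k).card ≤ 1 := by
  rw [Finset.card_le_one]
  intro a ha b hb
  simp only [Finset.mem_filter, Finset.mem_univ, true_and] at ha hb
  exact hv.1 a b (by rw [ha.2.1, ha.2.2, hb.2.1, hb.2.2])

theorem card_removal_le_one (hv : IsTourAltCycle π v) (i k : Fin n) :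
    (Finset.univ.filter fun j : ZMod (2 * m) =>
      ¬ Even j.val ∧ v j = k ∧ v (j + 1) = i).card ≤ 1 := by
  rw [Finset.card_le_one]
  intro a ha b hb
  simp only [Finset.mem_filter, Finset.mem_univ, true_and] at ha hb
  exact hv.1 a b (by rw [ha.2.1, ha.2.2, hb.2.1, hb.2.2])

/-- An arc that is not an insertion arc is not added by the cycle. -/
theorem card_insertion_eq_zero (hv : IsTourAltCycle π v) {i k : Fin n}
    (h : ¬ IsInsertionArc π i k) :
    (Finset.univ.filter fun j : ZMod (2 * m) =>
      Even j.val ∧ v j = i ∧ v (j + 1) = k).card = 0 := by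
  rw [Finset.card_eq_zero, Finset.filter_eq_empty_iff]
  rintro j - ⟨he, rfl, rfl⟩
  exact h (hv.2.1 j he)

/-- Only tour arcs are deleted by the cycle. -/
theorem card_removal_eq_zero (hv : IsTourAltCycle π v) {i k : Fin n} (h : k ≠ π i) :
    (Finset.univ.filter fun j : ZMod (2 * m) =>
      ¬ Even j.val ∧ v j = k ∧ v (j + 1) = i).card = 0 := by
  rw [Finset.card_eq_zero, Finset.filter_eq_empty_iff]
  rintro j - ⟨ho, rfl, rfl⟩
  exact h (hv.2.2 j ho)

theorem postCancelFlowAlt_zero_or_one (hv : IsTourAltCycle π v) (i k : Fin n) :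
    postCancelFlowAlt π v i k = 0 ∨ postCancelFlowAlt π v i k = 1 := by
  unfold postCancelFlowAlt
  by_cases h : k = π i
  · rw [card_insertion_eq_zero hv fun hi => hi.2.1 h, if_pos h]
    have := card_removal_le_one hv i k
    omega
  · rw [card_removal_eq_zero hv h, if_neg h]
    have := card_insertion_le_one hv i k
    omega

theorem postCancelFlowAlt_self (hfix : ∀ i, π i ≠ i) (hv : IsTourAltCycle π v) (i : Fin n) :
    postCancelFlowAlt π v i i = 0 := by
  have h : i ≠ π i := (hfix i).symm
  unfold postCancelFlowAlt
  rw [card_insertion_eq_zero hv fun hi => hi.1 rfl, card_removal_eq_zero hv h, if_neg h]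
  simp

/-- Out-degrees are preserved: `j ↦ j + 1` matches the removal arcs ending at `i` with the
insertion arcs starting at `i`. -/
theorem sum_postCancelFlowAlt_row (i : Fin n) : ∑ k, postCancelFlowAlt π v i k = 1 := by
  have hins := sum_card_fiber (fun j : ZMod (2 * m) => Even j.val ∧ v j = i) fun j => v (j + 1)
  have hrem := sum_card_fiber (fun j : ZMod (2 * m) => ¬ Even j.val ∧ v (j + 1) = i) v
  have hshift : (Finset.univ.filter fun j : ZMod (2 * m) => ¬ Even j.val ∧ v (j + 1) = i).card
      = (Finset.univ.filter fun j : ZMod (2 * m) => Even j.val ∧ v j = i).card :=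
    Finset.card_equiv (Equiv.addRight 1) (by simp [even_val_add_one, -Nat.not_even_iff_odd])
  simp only [and_assoc] at hins hrem
  simp only [and_comm (a := v (_ + 1) = i)] at hrem
  simp only [postCancelFlowAlt, Finset.sum_sub_distrib, Finset.sum_add_distrib, hins, hrem, hshift,
    Finset.sum_ite_eq', Finset.mem_univ, if_true]
  ring

/-- In-degrees are preserved: `j ↦ j + 1` matches the insertion arcs ending at `i` with the
removal arcs starting at `i`. -/
theorem sum_postCancelFlowAlt_col (i : Fin n) : ∑ k, postCancelFlowAlt π v k i = 1 := by
  have hins := sum_card_fiber (fun j : ZMod (2 * m) => Even j.val ∧ v (j + 1) = i) v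
  have hrem := sum_card_fiber (fun j : ZMod (2 * m) => ¬ Even j.val ∧ v j = i) fun j => v (j + 1)
  have hshift : (Finset.univ.filter fun j : ZMod (2 * m) => Even j.val ∧ v (j + 1) = i).card
      = (Finset.univ.filter fun j : ZMod (2 * m) => ¬ Even j.val ∧ v j = i).card :=
    Finset.card_equiv (Equiv.addRight 1) (by simp [even_val_add_one, -Nat.not_even_iff_odd])
  have htour : ∑ k, (if i = π k then (1 : ℤ) else 0) = 1 := by
    rw [Equiv.sum_comp π fun k => if i = k then (1 : ℤ) else 0]
    simp
  simp only [and_assoc] at hins hrem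
  simp only [and_comm (a := v (_ + 1) = i)] at hins
  simp only [postCancelFlowAlt, Finset.sum_sub_distrib, Finset.sum_add_distrib, hins, hrem, hshift,
    htour]
  ring

end

/-- Cancelling a tour-alternating cycle yields a 0,1-valued flow with all in- and
out-degrees equal to one; equivalently, the post-cancel flow is the arc-indicator of a
fixed-point-free permutation, i.e. a tour or a spanning vertex-disjoint collection of
subtours. -/
theorem stmt3 {n m : ℕ} (hn : 2 ≤ n) (hm : 1 ≤ m) [NeZero m]
    (π : Equiv.Perm (Fin n)) (hπ : IsTour π)
    (v : ZMod (2 * m) → Fin n) (hv : IsTourAltCycle π v) :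
    (∀ i k, postCancelFlowAlt π v i k = 0 ∨ postCancelFlowAlt π v i k = 1) ∧
    (∀ i, ∑ k, postCancelFlowAlt π v i k = 1) ∧
    (∀ i, ∑ k, postCancelFlowAlt π v k i = 1) ∧
    (∃ σ : Equiv.Perm (Fin n), (∀ i, σ i ≠ i) ∧
      ∀ i k, postCancelFlowAlt π v i k = if k = σ i then 1 else 0) := by
  have h01 := postCancelFlowAlt_zero_or_one hv
  refine ⟨h01, sum_postCancelFlowAlt_row, sum_postCancelFlowAlt_col, ?_⟩
  obtain ⟨σ, hσ⟩ := exists_perm_of_zero_one (postCancelFlowAlt π v) h01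
    sum_postCancelFlowAlt_row sum_postCancelFlowAlt_col
  refine ⟨σ, fun i hi => ?_, hσ⟩
  have hloop := hσ i i
  rw [postCancelFlowAlt_self hπ.1 hv i, if_pos hi.symm] at hloop
  exact zero_ne_one hloop
end

section
/- Let π be a tour on V = Fin n and let A be a finite set of arcs of the tour graph of π (each element either an insertion arc or a removal arc). Suppose the post-cancel flow of A is the arc-indicator of a tour different from π, i.e. there exists a fixed-point-free single-cycle permutation σ ≠ π of V with, for all i, k: (if k = π i then 1 else 0) + (if (i,k) is an insertion arc in A then 1 else 0) − (if (k,i) is a removal arc in A then 1 else 0) = (if k = σ i then 1 else 0). Then A decomposes into arc-disjoint tour-alternating cycles: there exist finitely many tour-alternating closed walks whose arc sets are pairwise disjoint and whose union of arcs equals A. -/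
/-- The set of arcs traversed by a closed walk `v : ZMod m → Fin n`. -/
def walkArcs {n m : ℕ} (v : ZMod m → Fin n) : Set (Fin n × Fin n) :=
  {p | ∃ j : ZMod m, p = (v j, v (j + 1))}

/-- The alternating sequence `x, σ x, ρ x, σ (ρ x), ρ (ρ x), …`, where `ρ = π⁻¹ * σ`. -/
def altSeq {n : ℕ} (π σ : Equiv.Perm (Fin n)) (x : Fin n) (q : ℕ) : Fin n :=
  if Even q then (π⁻¹ * σ)^[q / 2] x else σ ((π⁻¹ * σ)^[q / 2] x)

/-- The closed walk obtained from `altSeq` along one full cycle of `π⁻¹ * σ`. -/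
noncomputable def altWalk {n : ℕ} (π σ : Equiv.Perm (Fin n)) (x : Fin n) :
    ZMod (2 * Function.minimalPeriod (π⁻¹ * σ) x) → Fin n :=
  fun j => altSeq π σ x j.val

section

variable {n : ℕ} (π σ : Equiv.Perm (Fin n)) (x : Fin n)

lemma altSeq_two_mul (k : ℕ) : altSeq π σ x (2 * k) = (π⁻¹ * σ)^[k] x := by
  simp [altSeq]

lemma altSeq_two_mul_add_one (k : ℕ) :
    altSeq π σ x (2 * k + 1) = σ ((π⁻¹ * σ)^[k] x) := by
  have h : (2 * k + 1) / 2 = k := by omega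
  simp [altSeq, h]

/-- A step of the sequence at an odd index is a reversed arc of `π`. -/
lemma altSeq_odd_step (k : ℕ) :
    altSeq π σ x (2 * k + 1) = π (altSeq π σ x (2 * k + 1 + 1)) := by
  rw [show 2 * k + 1 + 1 = 2 * (k + 1) by ring, altSeq_two_mul, altSeq_two_mul_add_one,
    Function.iterate_succ_apply']
  simp

lemma altSeq_periodic :
    Function.Periodic (altSeq π σ x) (2 * Function.minimalPeriod (π⁻¹ * σ) x) := by
  intro q
  have h : (q + 2 * Function.minimalPeriod (π⁻¹ * σ) x) / 2
      = q / 2 + Function.minimalPeriod (π⁻¹ * σ) x := by omega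
  simp only [altSeq, h, Function.iterate_add_apply, Function.iterate_minimalPeriod]
  simp [Nat.even_add]

lemma altWalk_natCast (k : ℕ) : altWalk π σ x (k : ZMod _) = altSeq π σ x k := by
  rw [altWalk, ZMod.val_natCast, (altSeq_periodic π σ x).map_mod_nat]

lemma minimalPeriod_perm_pos (ρ : Equiv.Perm (Fin n)) (x : Fin n) :
    0 < Function.minimalPeriod ρ x :=
  Function.minimalPeriod_pos_of_mem_periodicPts (Function.Injective.mem_periodicPts ρ.injective x)

lemma altWalk_add_one (j : ZMod (2 * Function.minimalPeriod (π⁻¹ * σ) x)) :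
    altWalk π σ x (j + 1) = altSeq π σ x (j.val + 1) := by
  have : NeZero (2 * Function.minimalPeriod (π⁻¹ * σ) x) :=
    ⟨by have := minimalPeriod_perm_pos (π⁻¹ * σ) x; omega⟩
  rw [← altWalk_natCast, Nat.cast_add_one, ZMod.natCast_zmod_val]

lemma sameCycle_iff_iterate (ρ : Equiv.Perm (Fin n)) (x y : Fin n) :
    ρ.SameCycle x y ↔ ∃ k : ℕ, ρ^[k] x = y := by
  constructor
  · intro h
    obtain ⟨k, -, hk⟩ := h.exists_pow_eq'
    exact ⟨k, by rw [Equiv.Perm.iterate_eq_pow, hk]⟩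
  · rintro ⟨k, rfl⟩
    exact ⟨k, by rw [Equiv.Perm.iterate_eq_pow, zpow_natCast]⟩

lemma walkArcs_altWalk :
    walkArcs (altWalk π σ x) =
      {p | ∃ y, (π⁻¹ * σ).SameCycle x y ∧ (p = (y, σ y) ∨ p = (π y, y))} := by
  ext p
  constructor
  · rintro ⟨j, rfl⟩
    rw [altWalk_add_one, altWalk]
    obtain ⟨k, hk | hk⟩ := Nat.even_or_odd' j.val
    · refine ⟨(π⁻¹ * σ)^[k] x, (sameCycle_iff_iterate _ _ _).2 ⟨k, rfl⟩, .inl ?_⟩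
      rw [hk, altSeq_two_mul, altSeq_two_mul_add_one]
    · refine ⟨(π⁻¹ * σ)^[k + 1] x, (sameCycle_iff_iterate _ _ _).2 ⟨k + 1, rfl⟩, .inr ?_⟩
      rw [hk, altSeq_odd_step, show 2 * k + 1 + 1 = 2 * (k + 1) by ring, altSeq_two_mul]
  · rintro ⟨y, hy, rfl | rfl⟩
    · obtain ⟨k, rfl⟩ := (sameCycle_iff_iterate _ _ _).1 hy
      refine ⟨((2 * k : ℕ) : ZMod _), ?_⟩
      rw [← Nat.cast_add_one, altWalk_natCast, altWalk_natCast, altSeq_two_mul,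
        altSeq_two_mul_add_one]
    -- The removal arc ending at `y` is entered from the point `z` before `y` on its cycle.
    · obtain ⟨z, rfl⟩ := (π⁻¹ * σ).surjective y
      obtain ⟨k, hk⟩ := (sameCycle_iff_iterate _ _ _).1 (Equiv.Perm.sameCycle_apply_right.1 hy)
      have hk' : (π⁻¹ * σ)^[k + 1] x = (π⁻¹ * σ) z := by
        rw [Function.iterate_succ_apply', hk]
      refine ⟨((2 * k + 1 : ℕ) : ZMod _), ?_⟩
      rw [← Nat.cast_add_one, altWalk_natCast, altWalk_natCast, altSeq_odd_step,
        show 2 * k + 1 + 1 = 2 * (k + 1) by ring, altSeq_two_mul, hk']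

/-- The walk along a cycle of `π⁻¹ * σ` is tour-alternating once its arcs `(y, σ y)` are insertion
arcs. -/
lemma isTourAltCycle_altWalk
    (hins : ∀ y, (π⁻¹ * σ).SameCycle x y → IsInsertionArc π y (σ y)) :
    IsTourAltCycle π (altWalk π σ x) := by
  have hne : NeZero (2 * Function.minimalPeriod (π⁻¹ * σ) x) :=
    ⟨by have := minimalPeriod_perm_pos (π⁻¹ * σ) x; omega⟩
  have hI : ∀ j : ZMod (2 * Function.minimalPeriod (π⁻¹ * σ) x), Even j.val →
      IsInsertionArc π (altWalk π σ x j) (altWalk π σ x (j + 1)) := by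
    intro j hj
    obtain ⟨k, hk⟩ := even_iff_exists_two_mul.1 hj
    rw [altWalk_add_one, altWalk, hk, altSeq_two_mul, altSeq_two_mul_add_one]
    exact hins _ ((sameCycle_iff_iterate _ _ _).2 ⟨k, rfl⟩)
  have hR : ∀ j : ZMod (2 * Function.minimalPeriod (π⁻¹ * σ) x), ¬ Even j.val →
      altWalk π σ x j = π (altWalk π σ x (j + 1)) := by
    intro j hj
    obtain ⟨k, hk⟩ := Nat.not_even_iff_odd.1 hj
    rw [altWalk_add_one, altWalk, hk, altSeq_odd_step]
  refine ⟨?_, hI, hR⟩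
  intro j j' h
  obtain ⟨h1, h2⟩ := Prod.mk.inj h
  -- Two indices of the same parity have the same iterate of `π⁻¹ * σ` at their tails, and
  -- the iterates below the minimal period are distinct.
  have key : ∀ k k' : ℕ, k < Function.minimalPeriod (π⁻¹ * σ) x →
      k' < Function.minimalPeriod (π⁻¹ * σ) x →
      (π⁻¹ * σ)^[k] x = (π⁻¹ * σ)^[k'] x → k = k' := fun k k' hk hk' e =>
    (Function.iterate_eq_iterate_iff_of_lt_minimalPeriod hk hk').1 e
  have hj := ZMod.val_lt j
  have hj' := ZMod.val_lt j'
  apply ZMod.val_injective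
  by_cases e : Even j.val <;> by_cases e' : Even j'.val
  · obtain ⟨k, hk⟩ := even_iff_exists_two_mul.1 e
    obtain ⟨k', hk'⟩ := even_iff_exists_two_mul.1 e'
    rw [altWalk, altWalk, hk, hk', altSeq_two_mul, altSeq_two_mul] at h1
    have := key k k' (by omega) (by omega) h1
    omega
  · have a := hI j e
    rw [h1, h2, hR j' e'] at a
    exact absurd rfl a.2.2
  · have a := hI j' e'
    rw [← h1, ← h2, hR j e] at a
    exact absurd rfl a.2.2
  · obtain ⟨k, hk⟩ := Nat.not_even_iff_odd.1 e
    obtain ⟨k', hk'⟩ := Nat.not_even_iff_odd.1 e'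
    rw [altWalk, altWalk, hk, hk', altSeq_two_mul_add_one, altSeq_two_mul_add_one] at h1
    have := key k k' (by omega) (by omega) (σ.injective h1)
    omega

end

section

variable {n : ℕ} {π σ : Equiv.Perm (Fin n)} {A : Finset (Fin n × Fin n)}

/-- The flow equation at `k = π i`: the tour arc out of `i` is cancelled iff `σ` does not use it. -/
lemma removal_mem_iff
    (hflow : ∀ i k : Fin n,
      (if k = π i then (1 : ℤ) else 0)
      + (if (i, k) ∈ A ∧ IsInsertionArc π i k then 1 else 0)
      - (if (k, i) ∈ A ∧ IsRemovalArc π k i then 1 else 0)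
      = if k = σ i then 1 else 0) (i : Fin n) :
    (π i, i) ∈ A ↔ σ i ≠ π i := by
  have h := hflow i (π i)
  have h1 : ¬ IsInsertionArc π i (π i) := fun h => h.2.1 rfl
  have h2 : IsRemovalArc π (π i) i := rfl
  simp only [h1, h2, and_false, and_true, if_true, if_false] at h
  rw [ne_comm, Ne]
  by_cases a : (π i, i) ∈ A <;> by_cases b : π i = σ i <;>
    simp only [a, b, if_true, if_false] at h ⊢ <;>
    simp_all

/-- The flow equation at `k ≠ π i`: `A` contains the insertion arc `(i, k)` iff
`k = σ i`; at `k = π i` both sides of the equivalence are false. -/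
lemma insertion_mem_iff
    (hflow : ∀ i k : Fin n,
      (if k = π i then (1 : ℤ) else 0)
      + (if (i, k) ∈ A ∧ IsInsertionArc π i k then 1 else 0)
      - (if (k, i) ∈ A ∧ IsRemovalArc π k i then 1 else 0)
      = if k = σ i then 1 else 0) (i k : Fin n) :
    ((i, k) ∈ A ∧ IsInsertionArc π i k) ↔ (k = σ i ∧ σ i ≠ π i) := by
  by_cases e : k = π i
  · subst e
    constructor
    · exact fun h => absurd rfl h.2.2.1
    · exact fun h => absurd h.1.symm h.2
  · have h := hflow i k
    have h2 : ¬ IsRemovalArc π k i := e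
    simp only [e, h2, and_false, if_false, zero_add, sub_zero] at h
    constructor
    · intro a
      rw [if_pos a] at h
      have hk : k = σ i := by
        by_contra hk
        simp [hk] at h
      exact ⟨hk, hk ▸ e⟩
    · rintro ⟨b, -⟩
      rw [if_pos b] at h
      by_contra a
      simp [a] at h

end

/-- If cancelling a finite set `A` of arcs of the tour graph produces a tour different
from `π`, then `A` decomposes into finitely many arc-disjoint tour-alternating cycles. -/
theorem stmt4 {n : ℕ} (hn : 2 ≤ n) (π : Equiv.Perm (Fin n)) (hπ : IsTour π)
    (A : Finset (Fin n × Fin n))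
    (hA : ∀ p ∈ A, IsInsertionArc π p.1 p.2 ∨ IsRemovalArc π p.1 p.2)
    (σ : Equiv.Perm (Fin n)) (hσ : IsTour σ) (hσπ : σ ≠ π)
    (hflow : ∀ i k : Fin n,
      (if k = π i then (1 : ℤ) else 0)
      + (if (i, k) ∈ A ∧ IsInsertionArc π i k then 1 else 0)
      - (if (k, i) ∈ A ∧ IsRemovalArc π k i then 1 else 0)
      = if k = σ i then 1 else 0) :
    ∃ (N : ℕ) (m : Fin N → ℕ) (w : (t : Fin N) → ZMod (2 * m t) → Fin n),
      (∀ t, 1 ≤ m t) ∧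
      (∀ t, IsTourAltCycle π (w t)) ∧
      (∀ t t', t ≠ t' → Disjoint (walkArcs (w t)) (walkArcs (w t'))) ∧
      (⋃ t, walkArcs (w t)) = (A : Set (Fin n × Fin n)) := by
  have hrem := removal_mem_iff hflow
  have hinsm := insertion_mem_iff hflow
  set ρ : Equiv.Perm (Fin n) := π⁻¹ * σ with hρ
  have hfix : ∀ y, ρ y ≠ y ↔ σ y ≠ π y := fun y => by
    rw [hρ, Equiv.Perm.mul_apply, Ne, Equiv.Perm.inv_eq_iff_eq]
  have hsupp : ∀ {x y}, ρ.SameCycle x y → (ρ x ≠ x ↔ ρ y ≠ y) := fun h =>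
    not_congr h.apply_eq_self_iff
  have hinsArc : ∀ y, ρ y ≠ y → IsInsertionArc π y (σ y) := fun y hy =>
    ((hinsm y (σ y)).2 ⟨rfl, (hfix y).1 hy⟩).2
  have hAiff : ∀ p, p ∈ A ↔ ∃ y, ρ y ≠ y ∧ (p = (y, σ y) ∨ p = (π y, y)) := by
    intro p
    constructor
    · intro hp
      rcases hA p hp with h | h
      · have := (hinsm p.1 p.2).1 ⟨hp, h⟩
        exact ⟨p.1, (hfix _).2 this.2, .inl (Prod.ext rfl this.1)⟩
      · have e : p = (π p.2, p.2) := Prod.ext h rfl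
        rw [e] at hp
        exact ⟨p.2, (hfix _).2 ((hrem _).1 hp), .inr e⟩
    · rintro ⟨y, hy, rfl | rfl⟩
      · exact ((hinsm y (σ y)).2 ⟨rfl, (hfix y).1 hy⟩).1
      · exact (hrem y).2 ((hfix y).1 hy)
  -- `S` holds one chosen representative of each nontrivial cycle of `ρ`.
  classical
  let rep : Fin n → Fin n := fun x => (Quotient.mk (Equiv.Perm.SameCycle.setoid ρ) x).out
  have hrep : ∀ x, ρ.SameCycle (rep x) x := fun x =>
    Quotient.exact (s := Equiv.Perm.SameCycle.setoid ρ) (Quotient.out_eq _)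
  have hrepeq : ∀ {x y}, ρ.SameCycle x y → rep x = rep y := fun {x y} h =>
    congrArg Quotient.out (Quotient.sound (s := Equiv.Perm.SameCycle.setoid ρ) h)
  let S : Finset (Fin n) := Finset.univ.filter fun x => ρ x ≠ x ∧ rep x = x
  have hS : ∀ x, x ∈ S ↔ ρ x ≠ x ∧ rep x = x := fun x => by simp [S]
  let b : Fin S.card → S := S.equivFin.symm
  have hb : ∀ t, ρ (b t) ≠ b t ∧ rep (b t) = b t := fun t => (hS _).1 (b t).2
  refine ⟨S.card, fun t => Function.minimalPeriod ρ (b t), fun t => altWalk π σ (b t),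
    fun t => minimalPeriod_perm_pos ρ (b t), fun t => ?_, fun t t' htt' => ?_, ?_⟩
  · exact isTourAltCycle_altWalk π σ (b t) fun y hy => hinsArc y ((hsupp hy).1 (hb t).1)
  · rw [Set.disjoint_left]
    intro p hp hp'
    rw [walkArcs_altWalk] at hp hp'
    obtain ⟨y, hy, hpy⟩ := hp
    obtain ⟨z, hz, hpz⟩ := hp'
    have hzi := hinsArc z ((hsupp hz).1 (hb t').1)
    have hyi := hinsArc y ((hsupp hy).1 (hb t).1)
    -- An insertion arc is never a removal arc, so the shared arc determines the point `y = z`.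
    have hyz : y = z := by
      rcases hpy with rfl | rfl <;> rcases hpz with h | h
      · exact (Prod.mk.inj h).1
      · obtain ⟨h1, h2⟩ := Prod.mk.inj h
        exact absurd (h1.trans (congrArg π h2.symm)) hyi.2.2
      · obtain ⟨h1, h2⟩ := Prod.mk.inj h
        exact absurd (h1.symm.trans (congrArg π h2)) hzi.2.2
      · exact (Prod.mk.inj h).2
    subst hyz
    apply htt'
    have hbb : (b t : Fin n) = b t' := by
      rw [← (hb t).2, ← (hb t').2]
      exact hrepeq (hy.trans hz.symm)
    exact S.equivFin.symm.injective (Subtype.ext hbb)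
  · ext p
    simp only [Set.mem_iUnion, Finset.mem_coe, hAiff]
    constructor
    · rintro ⟨t, hp⟩
      rw [walkArcs_altWalk] at hp
      obtain ⟨y, hy, h⟩ := hp
      exact ⟨y, (hsupp hy).1 (hb t).1, h⟩
    · rintro ⟨y, hy, h⟩
      have hm : rep y ∈ S := (hS _).2 ⟨(hsupp (hrep y)).2 hy, hrepeq (hrep y)⟩
      refine ⟨S.equivFin ⟨rep y, hm⟩, ?_⟩
      rw [walkArcs_altWalk]
      refine ⟨y, ?_, h⟩
      simpa [b] using hrep y
end

section
/- Let π be a tour on V = Fin n and let A be a finite set of arcs of the tour graph of π (each element either an insertion arc or a removal arc). Suppose the post-cancel flow of A is the arc-indicator of a fixed-point-free permutation σ of V, i.e. for all i, k: (if k = π i then 1 else 0) + (if (i,k) is an insertion arc in A then 1 else 0) − (if (k,i) is a removal arc in A then 1 else 0) = (if k = σ i then 1 else 0). Then at every vertex w, the number of insertion arcs of A incident to w equals the number of removal arcs of A incident to w. -/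
/-!
The flow identity is summed along row `w` and along column `w`. The arc-indicators of `π` and `σ`
both have all row and column sums equal to `1`, so the row sum says that the insertion arcs of `A`
leaving `w` are as many as the removal arcs of `A` entering `w`, and the column sum says the same
with "leaving" and "entering" exchanged. No arc of the tour graph is a loop, so the number of
arcs incident to `w` is the number leaving plus the number entering
(`card_incident_eq_sum_add_sum`), and the two equalities add up to the claim.
-/

/-- For a loopless relation `R`, the number of `R`-arcs of `A` incident to `w` is the number of
those leaving `w` plus the number of those entering `w`. -/
lemma card_incident_eq_sum_add_sum {n : ℕ} (A : Finset (Fin n × Fin n))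
    (R : Fin n → Fin n → Prop) [∀ a b, Decidable (R a b)] (hR : ∀ a, ¬ R a a) (w : Fin n) :
    ((A.filter fun p => R p.1 p.2 ∧ (w = p.1 ∨ w = p.2)).card : ℤ) =
      (∑ k, if (w, k) ∈ A ∧ R w k then (1 : ℤ) else 0) +
        ∑ k, if (k, w) ∈ A ∧ R k w then (1 : ℤ) else 0 := by
  have h_card : ((A.filter fun p => R p.1 p.2 ∧ (w = p.1 ∨ w = p.2)).card : ℤ) =
      ∑ a, ∑ b, ((if w = a then (if (a, b) ∈ A ∧ R a b then (1 : ℤ) else 0) else 0) +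
        (if w = b then (if (a, b) ∈ A ∧ R a b then (1 : ℤ) else 0) else 0)) := by
    have h_univ : (A.filter fun p => R p.1 p.2 ∧ (w = p.1 ∨ w = p.2)) =
        Finset.univ.filter fun p => p ∈ A ∧ R p.1 p.2 ∧ (w = p.1 ∨ w = p.2) := by
      ext p; simp
    rw [h_univ, Finset.card_filter, Nat.cast_sum, Fintype.sum_prod_type]
    refine Finset.sum_congr rfl fun a _ => Finset.sum_congr rfl fun b _ => ?_
    have := hR w
    grind
  rw [h_card]
  simp only [Finset.sum_add_distrib]
  congr 1
  · rw [Finset.sum_comm]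
    simp
  · simp


/-- If cancelling a finite set `A` of arcs of the tour graph produces the arc-indicator
of a fixed-point-free permutation, then at every vertex the number of insertion arcs of
`A` incident to it equals the number of removal arcs of `A` incident to it. -/
theorem stmt6 {n : ℕ} (hn : 2 ≤ n) (π : Equiv.Perm (Fin n)) (hπ : IsTour π)
    (A : Finset (Fin n × Fin n))
    (hA : ∀ p ∈ A, IsInsertionArc π p.1 p.2 ∨ IsRemovalArc π p.1 p.2)
    (σ : Equiv.Perm (Fin n)) (hσ : ∀ i, σ i ≠ i)
    (hflow : ∀ i k : Fin n,
      (if k = π i then (1 : ℤ) else 0)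
      + (if (i, k) ∈ A ∧ IsInsertionArc π i k then 1 else 0)
      - (if (k, i) ∈ A ∧ IsRemovalArc π k i then 1 else 0)
      = if k = σ i then 1 else 0) :
    ∀ w : Fin n,
      (A.filter fun p => IsInsertionArc π p.1 p.2 ∧ (w = p.1 ∨ w = p.2)).card =
        (A.filter fun p => IsRemovalArc π p.1 p.2 ∧ (w = p.1 ∨ w = p.2)).card := by
  intro w
  have h_ins := card_incident_eq_sum_add_sum A (IsInsertionArc π) (fun a h => h.1 rfl) w
  have h_rem := card_incident_eq_sum_add_sum A (IsRemovalArc π) (fun a h => hπ.1 a h.symm) w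
  have h_row := Finset.sum_congr (rfl : (Finset.univ : Finset (Fin n)) = Finset.univ)
    fun k _ => hflow w k
  have h_col := Finset.sum_congr (rfl : (Finset.univ : Finset (Fin n)) = Finset.univ)
    fun i _ => hflow i w
  have h_perm (τ : Equiv.Perm (Fin n)) : ∑ i, (if w = τ i then (1 : ℤ) else 0) = 1 := by
    rw [Equiv.sum_comp τ fun j => if w = j then (1 : ℤ) else 0]
    simp
  simp only [Finset.sum_sub_distrib, Finset.sum_add_distrib, h_perm] at h_row h_col
  simp only [Finset.sum_ite_eq', Finset.sum_ite_eq, Finset.mem_univ, if_true] at h_row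
  zify
  linarith
end

section
/- Let π be a tour on V = Fin n with arc costs c : V → V → ℝ, let v : ZMod (2m) → V be a tour-alternating cycle (arcs pairwise distinct, even-indexed arcs insertion, odd-indexed removal), and let σ be the fixed-point-free permutation of V whose arc-indicator equals the post-cancel flow of v. Then the cost of the post-cancel flow equals the tour cost plus the residual cost of the cycle: ∑ i, c i (σ i) = ∑ i, c i (π i) + (∑_{j even} c (v j) (v (j+1)) − ∑_{j odd} c (v (j+1)) (v j)). In particular, if the residual cost ∑_{j even} c (v j) (v (j+1)) − ∑_{j odd} c (v (j+1)) (v j) is negative, then ∑ i, c i (σ i) < ∑ i, c i (π i). -/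
/-- Weighting each arc `(i, k)` by the number of indices `j` with `P j` whose arc
`(a j, b j)` is `(i, k)` amounts to summing the costs over those `j`. -/
theorem sum_sum_card_mul {ι V : Type*} [Fintype ι] [Fintype V] [DecidableEq V]
    (P : ι → Prop) [DecidablePred P] (a b : ι → V) (c : V → V → ℝ) :
    ∑ i, ∑ k, ((Finset.univ.filter fun j => P j ∧ a j = i ∧ b j = k).card : ℝ) * c i k
      = ∑ j ∈ Finset.univ.filter P, c (a j) (b j) := by
  rw [← Finset.sum_fiberwise (Finset.univ.filter P) a]
  refine Finset.sum_congr rfl fun i _ => ?_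
  rw [← Finset.sum_fiberwise _ b]
  refine Finset.sum_congr rfl fun k _ => ?_
  rw [Finset.filter_filter, Finset.filter_filter, ← nsmul_eq_mul, ← Finset.sum_const]
  refine Finset.sum_congr rfl fun j hj => ?_
  obtain ⟨-, -, rfl, rfl⟩ := Finset.mem_filter.1 hj
  rfl

theorem sum_sum_indicator_mul {V : Type*} [Fintype V] [DecidableEq V]
    (p : V → V) (c : V → V → ℝ) :
    ∑ i, ∑ k, (if k = p i then (1 : ℝ) else 0) * c i k = ∑ i, c i (p i) := by
  simp

/-- The cost of the post-cancel flow of a tour-alternating cycle equals the tour cost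
plus the residual cost of the cycle; in particular, a negative residual cost yields a
strict cost decrease. -/
theorem stmt11 {n m : ℕ} (hn : 2 ≤ n) (hm : 1 ≤ m) [NeZero m]
    (c : Fin n → Fin n → ℝ) (π : Equiv.Perm (Fin n)) (hπ : IsTour π)
    (v : ZMod (2 * m) → Fin n) (hv : IsTourAltCycle π v)
    (σ : Equiv.Perm (Fin n)) (hσ : ∀ i, σ i ≠ i)
    (hflow : ∀ i k, postCancelFlowAlt π v i k = if k = σ i then 1 else 0) :
    ((∑ i, c i (σ i)) = (∑ i, c i (π i)) +
      ((∑ j ∈ Finset.univ.filter fun j : ZMod (2 * m) => Even j.val,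
          c (v j) (v (j + 1)))
        - (∑ j ∈ Finset.univ.filter fun j : ZMod (2 * m) => ¬ Even j.val,
            c (v (j + 1)) (v j)))) ∧
    (((∑ j ∈ Finset.univ.filter fun j : ZMod (2 * m) => Even j.val,
          c (v j) (v (j + 1)))
        - (∑ j ∈ Finset.univ.filter fun j : ZMod (2 * m) => ¬ Even j.val,
            c (v (j + 1)) (v j))) < 0 →
      (∑ i, c i (σ i)) < ∑ i, c i (π i)) := by
  have key : (∑ i, c i (σ i)) = (∑ i, c i (π i)) +
      ((∑ j ∈ Finset.univ.filter fun j : ZMod (2 * m) => Even j.val,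
          c (v j) (v (j + 1)))
        - (∑ j ∈ Finset.univ.filter fun j : ZMod (2 * m) => ¬ Even j.val,
            c (v (j + 1)) (v j))) := by
    rw [← sum_sum_indicator_mul σ c, ← sum_sum_indicator_mul π c,
      ← sum_sum_card_mul (fun j : ZMod (2 * m) => Even j.val) v (fun j => v (j + 1)) c,
      ← sum_sum_card_mul (fun j : ZMod (2 * m) => ¬ Even j.val) (fun j => v (j + 1)) v c]
    simp only [← Finset.sum_sub_distrib, ← Finset.sum_add_distrib]
    refine Finset.sum_congr rfl fun i _ => Finset.sum_congr rfl fun k _ => ?_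
    have h : ((postCancelFlowAlt π v i k : ℤ) : ℝ) = if k = σ i then 1 else 0 := by
      rw [hflow]; push_cast; rfl
    rw [← h, postCancelFlowAlt]
    -- The flow lists the endpoints of a removal arc tail first; the double count, head first.
    simp only [and_comm (a := v _ = k)]
    push_cast
    ring
  exact ⟨key, fun h => by linarith⟩
end

section
/- Let σ be a permutation of V = Fin n with a fixed point v (σ v = v, modelling an isolated vertex), let h ∈ V with h ≠ v and σ h ≠ h, and set σ' := σ * Equiv.swap v h (the three-arc patch deleting the arc (h, σ h) and adding the arcs (h, v) and (v, σ h)). Then σ' h = v, σ' v = σ h, and σ' x = σ x for all x ∉ {v, h}; the fixed-point set of σ' is that of σ with v removed (so v is absorbed into the cycle of h, and σ'.SameCycle v h); and the cost over non-fixed points satisfies ∑_{x : σ' x ≠ x} c x (σ' x) = ∑_{x : σ x ≠ x} c x (σ x) + c h v + c v (σ h) − c h (σ h). -/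
/-!
Precomposing with `swap v h` changes `σ` only at `v` and `h`, and `v` is the only point whose
status as a fixed point changes. The non-fixed points of the patched permutation are therefore
`insert v A`, where `A` is the set of non-fixed points of `σ`. Separating the terms at `v` and `h`
from the two cost sums leaves the same sum over `A.erase h`. The two vertices lie on one cycle
because `v` is the new successor of `h`.
-/

/-- The three-arc patch `σ' = σ * swap v h` absorbing an isolated vertex `v` (a fixed
point of `σ`) into the cycle of a non-fixed vertex `h`: it sends `h` to `v` and `v` to
`σ h`, fixes all other successors, removes exactly `v` from the fixed-point set, puts
`v` and `h` on the same cycle, and changes the cost over non-fixed points by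
`c h v + c v (σ h) − c h (σ h)`. -/
theorem stmt14 {n : ℕ} (hn : 2 ≤ n) (c : Fin n → Fin n → ℝ)
    (σ : Equiv.Perm (Fin n)) (v h : Fin n)
    (hv : σ v = v) (hne : h ≠ v) (hh : σ h ≠ h) :
    (σ * Equiv.swap v h) h = v ∧
    (σ * Equiv.swap v h) v = σ h ∧
    (∀ x, x ≠ v → x ≠ h → (σ * Equiv.swap v h) x = σ x) ∧
    (∀ x, (σ * Equiv.swap v h) x = x ↔ (σ x = x ∧ x ≠ v)) ∧
    (σ * Equiv.swap v h).SameCycle v h ∧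
    (∑ x ∈ Finset.univ.filter fun x => (σ * Equiv.swap v h) x ≠ x,
        c x ((σ * Equiv.swap v h) x)) =
      (∑ x ∈ Finset.univ.filter fun x => σ x ≠ x, c x (σ x))
        + c h v + c v (σ h) - c h (σ h) := by
  have h1 : (σ * Equiv.swap v h) h = v := by simp [hv]
  have h2 : (σ * Equiv.swap v h) v = σ h := by simp
  have h3 : ∀ x, x ≠ v → x ≠ h → (σ * Equiv.swap v h) x = σ x := fun x hxv hxh => by
    simp [Equiv.swap_apply_of_ne_of_ne hxv hxh]
  -- Injectivity of `σ` is what keeps the new successor of `v` distinct from `v`.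
  have hσh : σ h ≠ v := fun e => hne (σ.injective (e.trans hv.symm))
  generalize σ * Equiv.swap v h = τ at *
  have h4 : ∀ x, τ x = x ↔ (σ x = x ∧ x ≠ v) := by
    intro x
    by_cases hxv : x = v
    · subst hxv; simp [h2, hσh]
    by_cases hxh : x = h
    · subst hxh; simp [h1, hh, Ne.symm hne]
    simp [h3 x hxv hxh, hxv]
  refine ⟨h1, h2, h3, h4, Equiv.Perm.SameCycle.symm ⟨1, by simpa using h1⟩, ?_⟩
  set A := Finset.univ.filter fun x => σ x ≠ x with hA
  have hhA : h ∈ A := by simp [hA, hh]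
  have hvA : v ∉ A := by simp [hA, hv]
  have hset : (Finset.univ.filter fun x => τ x ≠ x) = insert v A := by
    ext x
    simp only [hA, Finset.mem_filter, Finset.mem_univ, true_and, Finset.mem_insert, ne_eq, h4 x]
    tauto
  -- Away from `h`, the successors of the vertices in `A` are unchanged.
  have hrest : ∑ x ∈ A.erase h, c x (τ x) = ∑ x ∈ A.erase h, c x (σ x) := by
    refine Finset.sum_congr rfl fun x hx => ?_
    obtain ⟨hxh, hxA⟩ := Finset.mem_erase.mp hx
    rw [h3 x (fun e => hvA (e ▸ hxA)) hxh]
  rw [hset, Finset.sum_insert hvA, ← Finset.add_sum_erase A _ hhA,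
    ← Finset.add_sum_erase A (fun x => c x (σ x)) hhA, hrest, h1, h2]
  ring
end
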